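/- Extend the hook functions to all integers u by setting S_{(u|v)} := det M for u ∈ ℤ and v ≥ 0, where M is the (v+1)×(v+1) matrix with first row (h^{(j−1)}_{u+1})_{j=1,…,v+1} and i-th row (h^{(j−1)}_{2−i})_{j=1,…,v+1} for 2 ≤ i ≤ v+1. Then for every u < 0: S_{(u|v)} = (−1)^v if u + v = −1, and S_{(u|v)} = 0 if u + v ≠ −1. -/

import Mathlib

open Polynomial Matrix Finset

noncomputable section

variable {K L : Type*} [Field K] [Field L]

/-- The orthogonal-polynomial sequence: `φ₀ = 1`, `φ₁ = z - a 0`,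
`φ_{i+1} = (z - a i)·φ_i - b i·φ_{i-1}` (so `φ_{-1} = 0`). -/
def phi (a b : ℤ → K) : ℕ → Polynomial K
  | 0 => 1
  | 1 => Polynomial.X - Polynomial.C (a 0)
  | (i+2) => (Polynomial.X - Polynomial.C (a (i+1))) * phi a b (i+1)
      - Polynomial.C (b (i+1)) * phi a b i

/-- `φ` with integer index, `0` for negative index. -/
def phiZ (a b : ℤ → K) (m : ℤ) : Polynomial K :=
  if m < 0 then 0 else phi a b m.toNat

/-- Generalized Schur polynomial `S_λ(y₁,…,y_m|a,b)
  = det(φ_{λ_j+m-j}(y_i)) / ∏_{i<j}(y_i - y_j)` (indices here 0-based). -/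
def genS (a b : ℤ → K) (c : K →+* L) {m : ℕ} (y : Fin m → L) (lam : Fin m → ℕ) : L :=
  Matrix.det (Matrix.of fun i j : Fin m =>
      (phi a b (lam j + (m - 1 - (j : ℕ)))).eval₂ c (y i)) /
    ∏ i : Fin m, ∏ j ∈ Finset.Ioi i, (y i - y j)

/-- `h_i = S_{(i)}` for `i ≥ 0`, and `h_i = 0` for `i < 0`. -/
def genh (a b : ℤ → K) (c : K →+* L) {m : ℕ} (y : Fin m → L) (i : ℤ) : L :=
  if i < 0 then 0 else genS a b c y (fun j => if (j : ℕ) = 0 then i.toNat else 0)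

/-- `h_i^{(0)} = h_i`, `h_i^{(r+1)} = h_{i+1}^{(r)} + a(i+m-1)h_i^{(r)} + b(i+m-1)h_{i-1}^{(r)}`. -/
def genhr (a b : ℤ → K) (c : K →+* L) {m : ℕ} (y : Fin m → L) : ℕ → ℤ → L
  | 0, i => genh a b c y i
  | (r+1), i => genhr a b c y r (i+1) + c (a (i + m - 1)) * genhr a b c y r i
      + c (b (i + m - 1)) * genhr a b c y r (i-1)

/-- The field `F = K(x₁,…,x_n)`. -/
abbrev Fn (K : Type*) [Field K] (n : ℕ) := FractionRing (MvPolynomial (Fin n) K)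

/-- The embedding `K → K(x₁,…,x_n)`. -/
def cK (K : Type*) [Field K] (n : ℕ) : K →+* Fn K n :=
  (algebraMap (MvPolynomial (Fin n) K) (Fn K n)).comp MvPolynomial.C

/-- The variables `x₁,…,x_n` as elements of `K(x₁,…,x_n)`. -/
def xv (K : Type*) [Field K] (n : ℕ) (i : Fin n) : Fn K n :=
  algebraMap (MvPolynomial (Fin n) K) (Fn K n) (MvPolynomial.X i)

/-!
The recursion for `h^{(r)}` reaches at most `r` steps up the index, so `h^{(r)}_i` vanishes for
`i + r < 0` and equals `h_0 = S_∅` for `i + r = 0`; and `S_∅ = 1`, because the monic `φ_k` may be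
replaced by powers in the Vandermonde determinant. Hence the rows `(h^{(j)}_{-i})_j`, for
`i = 0, …, v`, form a unitriangular matrix. For `u < 0` the rows of `M` below the first are those
with `i = 0, …, v - 1`, and its first row is the one with `i = -(u + 1)`: it repeats a lower row if
`u + v > -1`, vanishes if `u + v < -1`, and for `u + v = -1` is the missing row `i = v`, moved to
the top by a cycle of sign `(-1)^v`.
-/

section HookMatrix

variable {R : Type*} {h : ℕ → ℤ → R} {u : ℤ} {v : ℕ}

/-- The Jacobi–Trudy matrix `M` of the hook `(u|v)` over an arbitrary array `h`, where `h r i`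
stands for `h^{(r)}_i`; rows and columns are indexed from `0`. -/
def hookMatrix (h : ℕ → ℤ → R) (u : ℤ) (v : ℕ) : Matrix (Fin (v + 1)) (Fin (v + 1)) R :=
  of fun i j => h j (if (i : ℕ) = 0 then u + 1 else 1 - (i : ℕ))

lemma hookMatrix_zero_apply (h : ℕ → ℤ → R) (u : ℤ) (v : ℕ) (j : Fin (v + 1)) :
    hookMatrix h u v 0 j = h j (u + 1) := by
  simp [hookMatrix]

lemma hookMatrix_apply_of_ne_zero (h : ℕ → ℤ → R) (u : ℤ) (v : ℕ) {i : Fin (v + 1)} (hi : i ≠ 0)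
    (j : Fin (v + 1)) : hookMatrix h u v i j = h j (1 - (i : ℕ)) := by
  simp [hookMatrix, hi]

lemma hookMatrix_eq_submatrix_finRotate (huv : u + v = -1) :
    hookMatrix h u v =
      (of fun i j : Fin (v + 1) => h j (-(i : ℕ))).submatrix (finRotate (v + 1)).symm id := by
  ext i j
  rw [submatrix_apply, of_apply, id]
  rcases eq_or_ne i 0 with rfl | hi
  · have hlast : (finRotate (v + 1)).symm 0 = Fin.last v := by
      rw [Equiv.symm_apply_eq, finRotate_last]
    rw [hookMatrix_zero_apply, hlast, Fin.val_last]
    congr 1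
    omega
  · have hpos : 0 < (i : ℕ) := Fin.pos_iff_ne_zero.2 hi
    rw [hookMatrix_apply_of_ne_zero h u v hi, coe_finRotate_symm_of_ne_zero hi]
    congr 1
    omega

variable [CommRing R]

lemma det_hookMatrix_of_add_lt (h_neg : ∀ (r : ℕ) (i : ℤ), i + r < 0 → h r i = 0)
    (huv : u + v < -1) : (hookMatrix h u v).det = 0 :=
  det_eq_zero_of_row_eq_zero 0 fun j => by
    rw [hookMatrix_zero_apply]
    exact h_neg j (u + 1) (by have := j.is_le; omega)

lemma det_hookMatrix_of_lt_add (hu : u < 0) (huv : -1 < u + v) : (hookMatrix h u v).det = 0 := by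
  lift -u to ℕ using by omega with k hk
  let i : Fin (v + 1) := ⟨k, by omega⟩
  have hi : i ≠ 0 := by simp only [i, ne_eq, Fin.ext_iff, Fin.val_zero]; omega
  refine det_zero_of_row_eq hi (funext fun j => ?_)
  rw [hookMatrix_apply_of_ne_zero h u v hi, hookMatrix_zero_apply]
  congr 1
  simp only [i]
  omega

lemma det_eq_one_of_antidiagonal_eq_one (h_neg : ∀ (r : ℕ) (i : ℤ), i + r < 0 → h r i = 0)
    (h_one : ∀ r : ℕ, h r (-r) = 1) (n : ℕ) :
    (of fun i j : Fin n => h j (-(i : ℕ))).det = 1 := by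
  have upper : (of fun i j : Fin n => h j (-(i : ℕ))).IsUpperTriangular := fun i j hij =>
    h_neg j (-(i : ℕ)) (by have : (j : ℕ) < i := hij; omega)
  rw [det_of_isUpperTriangular upper]
  exact prod_eq_one fun i _ => h_one i

lemma det_hookMatrix_of_add_eq (h_neg : ∀ (r : ℕ) (i : ℤ), i + r < 0 → h r i = 0)
    (h_one : ∀ r : ℕ, h r (-r) = 1) (huv : u + v = -1) : (hookMatrix h u v).det = (-1) ^ v := by
  rw [hookMatrix_eq_submatrix_finRotate huv, det_permute,
    det_eq_one_of_antidiagonal_eq_one h_neg h_one, Equiv.Perm.sign_symm, sign_finRotate]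
  simp

end HookMatrix

lemma det_eval_rev_of_isMonicOfDegree {R : Type*} [CommRing R] {m : ℕ} (y : Fin m → R)
    {p : ℕ → R[X]} (hp : ∀ k, IsMonicOfDegree (p k) k) :
    (of fun i j : Fin m => (p j.rev).eval (y i)).det =
      ∏ i : Fin m, ∏ j ∈ Ioi i, (y i - y j) := by
  have vandermonde_eq : (vandermonde y).det = (of fun i j : Fin m => (p j).eval (y i)).det :=
    det_eval_matrixOfPolynomials_eq_det_vandermonde y (fun j => p j)
      (fun j => (hp j).natDegree_eq) (fun j => (hp j).monic)
  calc (of fun i j : Fin m => (p j.rev).eval (y i)).det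
      = ((of fun i j : Fin m => (p j).eval (y i)).submatrix id Fin.revPerm).det := rfl
    _ = ((vandermonde y).submatrix id Fin.revPerm).det := by
      rw [det_permute', det_permute', vandermonde_eq]
    _ = (projVandermonde 1 y).det := by
      congr 1
      ext i j
      simp [projVandermonde_apply, vandermonde_apply]
    _ = ∏ i : Fin m, ∏ j ∈ Ioi i, (y i - y j) := by
      simp [det_projVandermonde]

lemma isMonicOfDegree_phi (a b : ℤ → K) : ∀ k : ℕ, IsMonicOfDegree (phi a b k) k
  | 0 => by simp [phi]
  | 1 => isMonicOfDegree_X_sub_one (a 0)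
  | k + 2 => by
    have lead : IsMonicOfDegree ((X - C (a (k + 1))) * phi a b (k + 1)) (k + 2) := by
      simpa only [add_comm 1] using
        (isMonicOfDegree_X_sub_one (a (k + 1))).mul (isMonicOfDegree_phi a b (k + 1))
    refine lead.sub ?_
    calc (C (b (k + 1)) * phi a b k).natDegree
        ≤ (phi a b k).natDegree := natDegree_C_mul_le _ _
      _ = k := (isMonicOfDegree_phi a b k).natDegree_eq
      _ < k + 2 := by omega

section GeneralizedSchur

variable (a b : ℤ → K) (c : K →+* L) {m : ℕ}

lemma isMonicOfDegree_map_phi (k : ℕ) : IsMonicOfDegree ((phi a b k).map c) k :=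
  ⟨by rw [natDegree_map, (isMonicOfDegree_phi a b k).natDegree_eq],
    (isMonicOfDegree_phi a b k).monic.map c⟩

lemma det_eval₂_phi (y : Fin m → L) :
    (of fun i j : Fin m => (phi a b (m - 1 - (j : ℕ))).eval₂ c (y i)).det =
      ∏ i : Fin m, ∏ j ∈ Ioi i, (y i - y j) := by
  rw [← det_eval_rev_of_isMonicOfDegree y (isMonicOfDegree_map_phi a b c)]
  simp only [eval_map, Fin.val_rev, Nat.sub_sub, add_comm 1]

lemma genS_zero {y : Fin m → L} (hy : Function.Injective y) : genS a b c y 0 = 1 := by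
  have vandermonde_ne_zero : ∏ i : Fin m, ∏ j ∈ Ioi i, (y i - y j) ≠ 0 :=
    prod_ne_zero_iff.2 fun i _ => prod_ne_zero_iff.2 fun j hj =>
      sub_ne_zero.2 (hy.ne (mem_Ioi.1 hj).ne)
  simp only [genS, Pi.zero_apply, zero_add]
  rw [det_eval₂_phi, div_self vandermonde_ne_zero]

lemma genh_of_neg (y : Fin m → L) {i : ℤ} (hi : i < 0) : genh a b c y i = 0 :=
  if_pos hi

lemma genh_zero (y : Fin m → L) : genh a b c y 0 = genS a b c y 0 := by
  simp only [genh, lt_irrefl, if_false, Int.toNat_zero, ite_self]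
  rfl

lemma genhr_of_add_neg (y : Fin m → L) (r : ℕ) (i : ℤ) (hir : i + r < 0) :
    genhr a b c y r i = 0 := by
  induction r generalizing i with
  | zero => exact genh_of_neg a b c y (by simpa using hir)
  | succ r ih =>
    push_cast at hir
    simp only [genhr, ih (i + 1) (by omega), ih i (by omega), ih (i - 1) (by omega), mul_zero,
      add_zero]

lemma genhr_neg_self (y : Fin m → L) (r : ℕ) : genhr a b c y r (-r) = genh a b c y 0 := by
  induction r with
  | zero => simp [genhr]
  | succ r ih =>
    have shift : (-(r + 1 : ℕ) : ℤ) + 1 = -r := by omega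
    simp only [genhr, shift, ih, genhr_of_add_neg a b c y r (-(r + 1 : ℕ)) (by omega),
      genhr_of_add_neg a b c y r (-(r + 1 : ℕ) - 1) (by omega), mul_zero, add_zero]

end GeneralizedSchur

lemma xv_injective (K : Type*) [Field K] (n : ℕ) : Function.Injective (xv K n) :=
  (IsFractionRing.injective (MvPolynomial (Fin n) K) (Fn K n)).comp MvPolynomial.X_injective

theorem hook_extension_neg_general (a b : ℤ → K) (c : K →+* L) {m : ℕ} {y : Fin m → L}
    (hy : Function.Injective y) {u : ℤ} (hu : u < 0) (v : ℕ) :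
    (hookMatrix (genhr a b c y) u v).det = if u + v = -1 then (-1) ^ v else 0 := by
  have h_neg := genhr_of_add_neg a b c y
  have h_one (r : ℕ) : genhr a b c y r (-r) = 1 := by
    rw [genhr_neg_self, genh_zero, genS_zero a b c hy]
  rcases lt_trichotomy (u + v) (-1) with huv | huv | huv
  · rw [if_neg huv.ne, det_hookMatrix_of_add_lt h_neg huv]
  · rw [if_pos huv, det_hookMatrix_of_add_eq h_neg h_one huv]
  · rw [if_neg huv.ne', det_hookMatrix_of_lt_add hu huv]

/-- Extending the hook functions `S_{(u|v)}` to all integers `u` by the Jacobi–Trudy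
determinant, for `u < 0` one gets `(-1)^v` when `u + v = -1` and `0` otherwise. -/
theorem hook_extension_neg (K : Type*) [Field K] (a b : ℤ → K) (n : ℕ) (hn : 1 ≤ n)
    (u : ℤ) (hu : u < 0) (v : ℕ) :
    Matrix.det (Matrix.of fun i j : Fin (v + 1) =>
        genhr a b (cK K n) (xv K n) (j : ℕ)
          (if (i : ℕ) = 0 then u + 1 else 1 - (i : ℕ)))
      = if u + v = -1 then (-1) ^ v else 0 :=
  hook_extension_neg_general a b (cK K n) (xv_injective K n) hu v
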